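/- The energy gap of the subsystem toric code Hamiltonian is 4(√2−1): the lowest excitation energy above the ground state is 2Δ_s = 4(√2 − 1), achieved by flipping a pair of syndrome bits, while a single gauge excitation costs Δ_g = 4√2; since syndrome bits satisfy ∏_p x_p = ∏_p z_p = 1, a single syndrome flip is impossible, and the gap is min(4√2, 4(√2−1)) = 4(√2−1). -/

import Mathlib

/-- Qubits of the subsystem toric code on the `L × L` torus:
`(0,x,y)` is the vertex at `(x,y)`, `(1,x,y)` is the horizontal edge from `(x,y)` to `(x+1,y)`,
and `(2,x,y)` is the vertical edge from `(x,y)` to `(x,y+1)`. -/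
abbrev Q (L : ℕ) := Fin 3 × ZMod L × ZMod L

/-- Support of the weight-6 X-type stabilizer of plaquette `p` (product of SW and NE triangles). -/
def SXsup (L : ℕ) (p : ZMod L × ZMod L) : Finset (Q L) :=
  {(0, p.1, p.2), (0, p.1 + 1, p.2 + 1), (1, p.1, p.2), (1, p.1, p.2 + 1),
   (2, p.1, p.2), (2, p.1 + 1, p.2)}

/-- Support of the weight-6 Z-type stabilizer of plaquette `p` (product of SE and NW triangles). -/
def SZsup (L : ℕ) (p : ZMod L × ZMod L) : Finset (Q L) :=
  {(0, p.1 + 1, p.2), (0, p.1, p.2 + 1), (1, p.1, p.2), (1, p.1, p.2 + 1),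
   (2, p.1, p.2), (2, p.1 + 1, p.2)}

/-- SW (X-type) triangle of plaquette `p`. -/
def TSW (L : ℕ) (p : ZMod L × ZMod L) : Finset (Q L) :=
  {(0, p.1, p.2), (1, p.1, p.2), (2, p.1, p.2)}

/-- NE (X-type) triangle of plaquette `p`. -/
def TNE (L : ℕ) (p : ZMod L × ZMod L) : Finset (Q L) :=
  {(0, p.1 + 1, p.2 + 1), (1, p.1, p.2 + 1), (2, p.1 + 1, p.2)}

/-- SE (Z-type) triangle of plaquette `p`. -/
def TSE (L : ℕ) (p : ZMod L × ZMod L) : Finset (Q L) :=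
  {(0, p.1 + 1, p.2), (1, p.1, p.2), (2, p.1 + 1, p.2)}

/-- NW (Z-type) triangle of plaquette `p`. -/
def TNW (L : ℕ) (p : ZMod L × ZMod L) : Finset (Q L) :=
  {(0, p.1, p.2 + 1), (1, p.1, p.2 + 1), (2, p.1, p.2)}

/-- The horizontal line `Γ` at height `y₀`: all vertices and horizontal edges with `y = y₀`. -/
def Gam (L : ℕ) [NeZero L] (y₀ : ZMod L) : Finset (Q L) :=
  Finset.univ.filter fun q => (q.1 = 0 ∨ q.1 = 1) ∧ q.2.2 = y₀

/-- The vertical line `Λ` at horizontal position `x₀`: all vertices and vertical edges with `x = x₀`. -/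
def Lam (L : ℕ) [NeZero L] (x₀ : ZMod L) : Finset (Q L) :=
  Finset.univ.filter fun q => (q.1 = 0 ∨ q.1 = 2) ∧ q.2.1 = x₀

/-- `F₂`-indicator vector of a finite set. -/
def ind {α : Type*} [DecidableEq α] (S : Finset α) : α → ZMod 2 :=
  fun i => if i ∈ S then 1 else 0

/-- The Pauli operator `X^a Z^b = ∏ᵢ Xᵢ^{aᵢ} Zᵢ^{bᵢ}` (modulo phase) on qubits indexed by `ι`,
as a matrix in the computational basis: `(X^a Z^b)|y⟩ = (-1)^{b·y} |y+a⟩`. -/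
def pauliOp {ι : Type*} [Fintype ι] [DecidableEq ι] (a b : ι → ZMod 2) :
    Matrix (ι → ZMod 2) (ι → ZMod 2) ℂ :=
  Matrix.of fun x y => if x = y + a then (-1 : ℂ) ^ (∑ i, (b i * y i).val) else 0

/-- The subsystem toric code Hamiltonian `H = −∑_T G(T)`, summing the four triangle
operators of every plaquette, as a matrix on the `2^{3L²}`-dimensional Hilbert space. -/
noncomputable def Ham (L : ℕ) [NeZero L] : Matrix (Q L → ZMod 2) (Q L → ZMod 2) ℂ :=
  -∑ p : ZMod L × ZMod L,
    (pauliOp (ind (TSW L p)) 0 + pauliOp (ind (TNE L p)) 0 +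
     pauliOp 0 (ind (TSE L p)) + pauliOp 0 (ind (TNW L p)))

/-!
Let `K_p` be the sum of the four triangle operators of the plaquette `p`, and let `X_p`, `Z_p` be
its stabilizers, the products of its two X-type and of its two Z-type triangles. X- and Z-type
triangles of the same plaquette anticommute and those of different plaquettes commute, so
`K_p² = 4 + 2 X_p + 2 Z_p`, and the operators `K_p`, `X_p`, `Z_p` all commute. On a joint
eigenvector with syndromes `x_p, z_p = ±1`, the operator `K_p` is `±2√2`, `±2` or `0`. As
`∏ X_p = ∏ Z_p = 1`, a flipped syndrome comes with a second one, and both plaquettes lose at least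
`2√2 - 2`; with no flip, `K_p = -2√2` costs `4√2`. Conversely, the product of one X-type and one
Z-type triangle of `p` reverses the sign of `K_p` and commutes with the other `K_q`, so all sign
choices occur, and a bit flip on a single horizontal edge flips exactly two Z-type syndromes.
-/

open scoped Matrix

section Eigenvectors

variable {k V ι : Type*} [CommRing k] [AddCommGroup V] [Module k V]

theorem exists_joint_eigenvector_of_sq [Finite ι] {f : ι → Module.End k V}
    (hf : ∀ i j, Commute (f i) (f j)) {s : ι → k} {v : V} (hv : v ≠ 0)
    (hs : ∀ i, f i (f i v) = s i ^ 2 • v) :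
    ∃ w ≠ 0, (∀ g : Module.End k V, (∀ i, Commute g (f i)) → ∀ c : k, g v = c • v → g w = c • w) ∧
      ∃ t : ι → k, ∀ i, t i ^ 2 = s i ^ 2 ∧ f i w = t i • w := by
  classical
  cases nonempty_fintype ι
  suffices h : ∀ S : Finset ι, ∃ w ≠ 0,
      (∀ g : Module.End k V, (∀ i, Commute g (f i)) → ∀ c : k, g v = c • v → g w = c • w) ∧
      ∀ i ∈ S, ∃ t, t ^ 2 = s i ^ 2 ∧ f i w = t • w by
    obtain ⟨w, hw, hpres, ht⟩ := h Finset.univ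
    choose t ht using fun i => ht i (Finset.mem_univ i)
    exact ⟨w, hw, hpres, t, ht⟩
  intro S
  induction S using Finset.induction_on with
  | empty => exact ⟨v, hv, fun _ _ _ h => h, by simp⟩
  | insert j S _ ih =>
    obtain ⟨w, hw, hpres, hS⟩ := ih
    by_cases hj : f j w = s j • w
    · exact ⟨w, hw, hpres, Finset.forall_mem_insert _ _ _ |>.mpr ⟨⟨s j, rfl, hj⟩, hS⟩⟩
    have hsq : f j (f j w) = s j ^ 2 • w :=
      hpres (f j * f j) (fun i => (hf j i).mul_left (hf j i)) _ (hs j)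
    -- `(f j - s j) w` survives and lies in the kernel of `f j + s j`.
    have hstep (g : Module.End k V) (hg : Commute g (f j)) (c : k) (hc : g w = c • w) :
        g (f j w - s j • w) = c • (f j w - s j • w) := by
      have hgf : g (f j w) = f j (g w) := LinearMap.congr_fun hg w
      rw [map_sub, map_smul, hgf, hc, map_smul]
      module
    refine ⟨f j w - s j • w, sub_ne_zero.mpr hj,
      fun g hg c hc => hstep g (hg j) c (hpres g hg c hc),
      Finset.forall_mem_insert _ _ _ |>.mpr ⟨⟨-s j, neg_sq _, ?_⟩, fun i hi => ?_⟩⟩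
    · rw [map_sub, map_smul, hsq]
      module
    · obtain ⟨t, ht, hit⟩ := hS i hi
      exact ⟨t, ht, hstep _ (hf i j) t hit⟩

theorem exists_joint_eigenvector_of_flip [IsDomain k] [Finite ι] {f F : ι → Module.End k V}
    (hFf : ∀ i, SemiconjBy (F i) (f i) (-f i)) (hcomm : ∀ i j, i ≠ j → Commute (F i) (f j))
    (hinj : ∀ i, Function.Injective (F i)) {s t : ι → k} (hst : ∀ i, t i ^ 2 = s i ^ 2) {v : V}
    (hv : v ≠ 0) (hs : ∀ i, f i v = s i • v) : ∃ w ≠ 0, ∀ i, f i w = t i • w := by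
  classical
  cases nonempty_fintype ι
  suffices h : ∀ S : Finset ι, ∃ w ≠ 0, ∀ i, f i w = S.piecewise t s i • w by
    simpa using h Finset.univ
  intro S
  induction S using Finset.induction_on with
  | empty => exact ⟨v, hv, by simpa using hs⟩
  | insert j S hjS ih =>
    obtain ⟨w, hw, hS⟩ := ih
    have hjw : f j w = s j • w := by simpa [hjS] using hS j
    rcases sq_eq_sq_iff_eq_or_eq_neg.mp (hst j) with hj | hj
    · refine ⟨w, hw, fun i => ?_⟩
      rcases eq_or_ne i j with rfl | hij
      · simpa [hj] using hjw
      · simpa [hij] using hS i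
    · refine ⟨F j w, (map_ne_zero_iff _ (hinj j)).mpr hw, fun i => ?_⟩
      rcases eq_or_ne i j with rfl | hij
      · have hflip : F i (f i w) = -f i (F i w) := LinearMap.congr_fun (hFf i) w
        rw [← neg_eq_iff_eq_neg.mpr hflip, hjw]
        simp [hj]
      · have hfix : F j (f i w) = f i (F j w) := LinearMap.congr_fun (hcomm j i hij.symm) w
        rw [← hfix, hS i, map_smul, Finset.piecewise_insert_of_ne _ _ _ hij]

theorem prod_eigenvalue_eq_one [IsDomain k] [Module.IsTorsionFree k V] {A : Type*}
    [AddCommMonoid A] [Fintype ι] (ρ : AddChar A (Module.End k V)) {a : ι → A}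
    (ha : ∑ i, a i = 0) {v : V} (hv : v ≠ 0) {e : ι → k} (he : ∀ i, ρ (a i) v = e i • v) :
    ∏ i, e i = 1 := by
  classical
  have hprod (S : Finset ι) : ρ (∑ i ∈ S, a i) v = (∏ i ∈ S, e i) • v := by
    induction S using Finset.induction_on with
    | empty => simp
    | insert j S hj ih =>
      rw [Finset.sum_insert hj, Finset.prod_insert hj, AddChar.map_add_eq_mul, Module.End.mul_apply,
        ih, map_smul, he, smul_smul, mul_comm]
  have huniv := hprod Finset.univ
  rw [ha, AddChar.map_zero_eq_one, Module.End.one_apply] at huniv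
  exact smul_left_injective k hv (by simpa using huniv.symm)

end Eigenvectors

theorem exists_eigenvalues_eq_iff {n : Type*} [Fintype n] [DecidableEq n] {A : Matrix n n ℂ}
    (hA : A.IsHermitian) {r : ℝ} :
    (∃ i, hA.eigenvalues i = r) ↔ ∃ v ≠ 0, A *ᵥ v = r • v := by
  constructor
  · rintro ⟨i, rfl⟩
    refine ⟨(hA.eigenvectorBasis i).ofLp, ?_, hA.mulVec_eigenvectorBasis i⟩
    simpa using hA.eigenvectorBasis.orthonormal.ne_zero i
  · rintro ⟨v, hv, hAv⟩
    rw [← Set.mem_range, ← hA.spectrum_real_eq_range_eigenvalues,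
      ← spectrum.algebraMap_mem_iff ℂ, ← Matrix.spectrum_toLin']
    refine (Module.End.hasEigenvalue_of_hasEigenvector
      (Module.End.hasEigenvector_iff.mpr ⟨?_, hv⟩)).mem_spectrum
    simpa [Module.End.mem_eigenspace_iff] using hAv

theorem semiconjBy_neg_comm {R : Type*} [Ring R] {x z : R} :
    SemiconjBy x z (-z) ↔ SemiconjBy z x (-x) := by
  rw [SemiconjBy, SemiconjBy, neg_mul, neg_mul, eq_comm, neg_eq_iff_eq_neg]

theorem add_mul_self_of_semiconjBy_neg {R : Type*} [Ring R] {x z : R} (h : SemiconjBy x z (-z)) :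
    (x + z) * (x + z) = x * x + z * z := by
  rw [add_mul, mul_add, mul_add, h.eq]
  noncomm_ring

theorem semiconjBy_neg_sum {β R : Type*} [Fintype β] [NonUnitalNonAssocRing R] {x : R} {z : β → R}
    (h : ∀ j, SemiconjBy x (z j) (-z j)) : SemiconjBy x (∑ j, z j) (-∑ j, z j) := by
  rw [SemiconjBy, neg_mul, Finset.mul_sum, Finset.sum_mul, ← Finset.sum_neg_distrib]
  exact Finset.sum_congr rfl fun j _ => (h j).eq.trans (neg_mul _ _)

theorem semiconjBy_mul_add_neg {R : Type*} [Ring R] {x z A B : R} (hxA : Commute x A)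
    (hxB : SemiconjBy x B (-B)) (hzA : SemiconjBy z A (-A)) (hzB : Commute z B) :
    SemiconjBy (x * z) (A + B) (-(A + B)) := by
  rw [neg_add]
  exact (hxA.neg_right.semiconjBy.mul_left hzA).add_right (hxB.mul_left hzB.semiconjBy)

theorem commute_addChar {A R : Type*} [AddCommMonoid A] [Monoid R] (ρ : AddChar A R) (a b : A) :
    Commute (ρ a) (ρ b) := by
  rw [Commute, SemiconjBy, ← AddChar.map_add_eq_mul, add_comm, AddChar.map_add_eq_mul]

section ElementaryAbelian

variable {A : Type*} [AddCommGroup A] [Module (ZMod 2) A]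

theorem eq_add_iff_eq_add_of_module_zmod_two {x y a : A} : x = y + a ↔ y = x + a := by
  rw [← sub_eq_iff_eq_add, ZModModule.sub_eq_add, eq_comm]

theorem addChar_mul_self {R : Type*} [Monoid R] (ρ : AddChar A R) (a : A) : ρ a * ρ a = 1 := by
  rw [← AddChar.map_add_eq_mul, ZModModule.add_self, AddChar.map_zero_eq_one]

theorem involutive_addChar {k V : Type*} [Semiring k] [AddCommMonoid V] [Module k V]
    (ρ : AddChar A (Module.End k V)) (a : A) : Function.Involutive (ρ a) := fun v => by
  rw [← Module.End.mul_apply, addChar_mul_self, Module.End.one_apply]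

theorem addChar_add_mul_self {R : Type*} [Ring R] (ρ : AddChar A R) (a b : A) :
    (ρ a + ρ b) * (ρ a + ρ b) = 2 + 2 * ρ (a + b) := by
  rw [AddChar.map_add_eq_mul, add_mul, mul_add, mul_add, addChar_mul_self, addChar_mul_self,
    (commute_addChar ρ b a).eq, two_mul, ← one_add_one_eq_two]
  abel

end ElementaryAbelian

section Pauli

variable {ι : Type*}

/-- The character `t ↦ (-1)^t` of `𝔽₂`. -/
def signChar : AddChar (ZMod 2) ℝ := AddChar.zmodChar 2 (ζ := -1) (by norm_num)

theorem signChar_one : signChar 1 = -1 := by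
  simp [signChar, AddChar.zmodChar_apply, ZMod.val_one]

/-- The operators `X^a`, as a representation of `𝔽₂^ι`. All eigenvalues of interest are real, so
operators on the state space are regarded as `ℝ`-linear maps. -/
noncomputable def pauliX : AddChar (ι → ZMod 2) (Module.End ℝ ((ι → ZMod 2) → ℂ)) where
  toFun a := LinearMap.funLeft ℝ ℂ (· + a)
  map_zero_eq_one' := by ext; simp [LinearMap.funLeft_apply]
  map_add_eq_mul' a b := by
    refine LinearMap.ext fun v => funext fun x => ?_
    simp [LinearMap.funLeft_apply, add_assoc]

theorem pauliX_apply (a : ι → ZMod 2) (v : (ι → ZMod 2) → ℂ) (x : ι → ZMod 2) :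
    pauliX a v x = v (x + a) := rfl

variable [Fintype ι]

/-- The operators `Z^b`, as a representation of `𝔽₂^ι` by `ℝ`-linear maps. -/
noncomputable def pauliZ : AddChar (ι → ZMod 2) (Module.End ℝ ((ι → ZMod 2) → ℂ)) where
  toFun b := LinearMap.pi fun x => signChar (b ⬝ᵥ x) • LinearMap.proj x
  map_zero_eq_one' := by
    refine LinearMap.ext fun v => funext fun x => ?_
    simp
  map_add_eq_mul' b c := by
    refine LinearMap.ext fun v => funext fun x => ?_
    simp [add_dotProduct, AddChar.map_add_eq_mul, mul_assoc]

theorem pauliZ_apply (b : ι → ZMod 2) (v : (ι → ZMod 2) → ℂ) (x : ι → ZMod 2) :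
    pauliZ b v x = signChar (b ⬝ᵥ x) • v x := rfl

theorem pauliX_mul_pauliZ (a b : ι → ZMod 2) :
    pauliX a * pauliZ b = signChar (b ⬝ᵥ a) • (pauliZ b * pauliX a) := by
  refine LinearMap.ext fun v => funext fun x => ?_
  simp only [Module.End.mul_apply, LinearMap.smul_apply, Pi.smul_apply, pauliX_apply, pauliZ_apply,
    dotProduct_add, AddChar.map_add_eq_mul, smul_smul, mul_comm]

theorem commute_pauliX_pauliZ {a b : ι → ZMod 2} (h : b ⬝ᵥ a = 0) :
    Commute (pauliX a) (pauliZ b) := by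
  rw [Commute, SemiconjBy, pauliX_mul_pauliZ, h, AddChar.map_zero_eq_one, one_smul]

theorem semiconjBy_pauliX_pauliZ_neg {a b : ι → ZMod 2} (h : b ⬝ᵥ a = 1) :
    SemiconjBy (pauliX a) (pauliZ b) (-pauliZ b) := by
  refine LinearMap.ext fun v => ?_
  rw [pauliX_mul_pauliZ, h, signChar_one]
  simp

variable [DecidableEq ι]

theorem pauliOp_left_mulVec (a : ι → ZMod 2) (v : (ι → ZMod 2) → ℂ) :
    pauliOp a 0 *ᵥ v = pauliX a v := by
  ext x
  simp [pauliOp, Matrix.mulVec, dotProduct, pauliX_apply,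
    eq_add_iff_eq_add_of_module_zmod_two (x := x)]

theorem pauliOp_right_mulVec (b : ι → ZMod 2) (v : (ι → ZMod 2) → ℂ) :
    pauliOp 0 b *ᵥ v = pauliZ b v := by
  ext x
  have hsign : signChar (b ⬝ᵥ x) = (-1) ^ ∑ i, (b i * x i).val := by
    rw [signChar, dotProduct, ← AddChar.zmodChar_apply' (n := 2) (by norm_num), Nat.cast_sum]
    simp only [ZMod.natCast_zmod_val]
  rw [pauliZ_apply, hsign]
  simp [pauliOp, Matrix.mulVec, dotProduct]

theorem isHermitian_pauliOp_left (a : ι → ZMod 2) : (pauliOp a 0).IsHermitian := by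
  ext x y
  simp [pauliOp, eq_add_iff_eq_add_of_module_zmod_two (x := x)]

theorem isHermitian_pauliOp_right (b : ι → ZMod 2) : (pauliOp 0 b).IsHermitian := by
  ext x y
  rcases eq_or_ne x y with rfl | hxy
  · simp [pauliOp]
  · simp [pauliOp, hxy, hxy.symm]

end Pauli

section Plaquettes

variable {ι P : Type*} [Fintype ι] {a b : P → Fin 2 → ι → ZMod 2}

/-- The local operator `K_p = X^{a₀} + X^{a₁} + Z^{b₀} + Z^{b₁}` of the plaquette `p`. -/
noncomputable def plaquetteOp (a b : P → Fin 2 → ι → ZMod 2) (p : P) :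
    Module.End ℝ ((ι → ZMod 2) → ℂ) :=
  ∑ i, pauliX (a p i) + ∑ j, pauliZ (b p j)

theorem commute_pauliX_plaquetteOp {c : ι → ZMod 2} {p : P} (hc : ∀ j, b p j ⬝ᵥ c = 0) :
    Commute (pauliX c) (plaquetteOp a b p) :=
  (Commute.sum_right _ _ _ fun i _ => commute_addChar pauliX c (a p i)).add_right
    (Commute.sum_right _ _ _ fun j _ => commute_pauliX_pauliZ (hc j))

theorem commute_pauliZ_plaquetteOp {c : ι → ZMod 2} {p : P} (hc : ∀ i, c ⬝ᵥ a p i = 0) :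
    Commute (pauliZ c) (plaquetteOp a b p) :=
  (Commute.sum_right _ _ _ fun i _ => (commute_pauliX_pauliZ (hc i)).symm).add_right
    (Commute.sum_right _ _ _ fun j _ => commute_addChar pauliZ c (b p j))

variable [DecidableEq P]

/-- The gauge generators `X^{a p i}` and `Z^{b q j}` anticommute if they belong to the same
plaquette and commute otherwise. -/
def IsGaugeDual (a b : P → Fin 2 → ι → ZMod 2) : Prop :=
  ∀ p q i j, b q j ⬝ᵥ a p i = if p = q then 1 else 0

namespace IsGaugeDual

theorem dotProduct_sum (h : IsGaugeDual a b) (p q : P) (j : Fin 2) : b q j ⬝ᵥ ∑ i, a p i = 0 := by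
  rw [_root_.dotProduct_sum, Fin.sum_univ_two, h, h, CharTwo.add_self_eq_zero]

theorem sum_dotProduct (h : IsGaugeDual a b) (p q : P) (i : Fin 2) : (∑ j, b q j) ⬝ᵥ a p i = 0 := by
  rw [_root_.sum_dotProduct, Fin.sum_univ_two, h, h, CharTwo.add_self_eq_zero]

theorem sum_dotProduct_sum (h : IsGaugeDual a b) (p q : P) : (∑ j, b q j) ⬝ᵥ ∑ i, a p i = 0 := by
  simp only [_root_.dotProduct_sum, h.sum_dotProduct, Finset.sum_const_zero]

theorem semiconjBy_neg (h : IsGaugeDual a b) (p : P) (i j : Fin 2) :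
    SemiconjBy (pauliX (a p i)) (pauliZ (b p j)) (-pauliZ (b p j)) :=
  semiconjBy_pauliX_pauliZ_neg (by rw [h, if_pos rfl])

theorem plaquetteOp_mul_self (h : IsGaugeDual a b) (p : P) :
    plaquetteOp a b p * plaquetteOp a b p =
      (2 + 2 * pauliX (∑ i, a p i)) + (2 + 2 * pauliZ (∑ j, b p j)) := by
  have hanti (i : Fin 2) := semiconjBy_neg_sum fun j => h.semiconjBy_neg p i j
  rw [plaquetteOp, add_mul_self_of_semiconjBy_neg
    (semiconjBy_neg_comm.mp (semiconjBy_neg_sum fun i => semiconjBy_neg_comm.mp (hanti i)))]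
  simp only [Fin.sum_univ_two, addChar_add_mul_self]

theorem plaquetteOp_apply_apply (h : IsGaugeDual a b) {p : P} {v : (ι → ZMod 2) → ℂ} {e d : ℝ}
    (he : pauliX (∑ i, a p i) v = e • v) (hd : pauliZ (∑ j, b p j) v = d • v) :
    plaquetteOp a b p (plaquetteOp a b p v) = (4 + 2 * e + 2 * d) • v := by
  rw [← Module.End.mul_apply, h.plaquetteOp_mul_self]
  simp only [LinearMap.add_apply, Module.End.mul_apply, Module.End.ofNat_apply, he, hd]
  module

theorem commute_plaquetteOp_of_ne (h : IsGaugeDual a b) {p q : P} (hpq : p ≠ q) (i j : Fin 2) :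
    Commute (pauliX (a p i)) (plaquetteOp a b q) ∧ Commute (pauliZ (b p j)) (plaquetteOp a b q) :=
  ⟨commute_pauliX_plaquetteOp fun j => by rw [h, if_neg hpq],
    commute_pauliZ_plaquetteOp fun i => by rw [h, if_neg hpq.symm]⟩

theorem commute_plaquetteOp (h : IsGaugeDual a b) (p q : P) :
    Commute (plaquetteOp a b p) (plaquetteOp a b q) := by
  rcases eq_or_ne p q with rfl | hpq
  · exact Commute.refl _
  · exact (Commute.sum_left _ _ _ fun i _ => (h.commute_plaquetteOp_of_ne hpq i 0).1).add_left
      (Commute.sum_left _ _ _ fun j _ => (h.commute_plaquetteOp_of_ne hpq 0 j).2)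

theorem semiconjBy_flip (h : IsGaugeDual a b) (p : P) :
    SemiconjBy (pauliX (a p 0) * pauliZ (b p 0)) (plaquetteOp a b p) (-plaquetteOp a b p) :=
  semiconjBy_mul_add_neg (Commute.sum_right _ _ _ fun i _ => commute_addChar pauliX _ (a p i))
    (semiconjBy_neg_sum fun j => h.semiconjBy_neg p 0 j)
    (semiconjBy_neg_sum fun i => semiconjBy_neg_comm.mp (h.semiconjBy_neg p i 0))
    (Commute.sum_right _ _ _ fun j _ => commute_addChar pauliZ _ (b p j))

theorem exists_stabilizer_eigenvector [Fintype P] (h : IsGaugeDual a b) {v : (ι → ZMod 2) → ℂ}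
    (hv : v ≠ 0) {r : ℝ} (hr : (∑ p, plaquetteOp a b p) v = r • v) :
    ∃ w ≠ 0, (∑ p, plaquetteOp a b p) w = r • w ∧ ∃ e d : P → ℝ,
      (∀ p, e p ^ 2 = 1 ∧ pauliX (∑ i, a p i) w = e p • w) ∧
      ∀ p, d p ^ 2 = 1 ∧ pauliZ (∑ j, b p j) w = d p • w := by
  have hX (p : P) : Commute (∑ q, plaquetteOp a b q) (pauliX (∑ i, a p i)) :=
    Commute.sum_left _ _ _ fun q _ =>
      (commute_pauliX_plaquetteOp fun j => h.dotProduct_sum p q j).symm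
  have hZ (p : P) : Commute (∑ q, plaquetteOp a b q) (pauliZ (∑ j, b p j)) :=
    Commute.sum_left _ _ _ fun q _ =>
      (commute_pauliZ_plaquetteOp fun i => h.sum_dotProduct q p i).symm
  obtain ⟨u, hu, hpresX, e, he⟩ := exists_joint_eigenvector_of_sq
    (f := fun p => pauliX (∑ i, a p i)) (s := 1) (fun _ _ => commute_addChar _ _ _) hv
    fun p => by simpa using involutive_addChar pauliX _ v
  obtain ⟨w, hw, hpresZ, d, hd⟩ := exists_joint_eigenvector_of_sq
    (f := fun p => pauliZ (∑ j, b p j)) (s := 1) (fun _ _ => commute_addChar _ _ _) hu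
    fun p => by simpa using involutive_addChar pauliZ _ u
  simp only [Pi.one_apply, one_pow] at he hd
  have hew (p : P) : pauliX (∑ i, a p i) w = e p • w :=
    hpresZ _ (fun q => commute_pauliX_pauliZ (h.sum_dotProduct_sum p q)) _ (he p).2
  exact ⟨w, hw, hpresZ _ hZ r (hpresX _ hX r hr), e, d, fun p => ⟨(he p).1, hew p⟩, hd⟩

theorem exists_syndrome_of_eigenvector [Fintype P] (h : IsGaugeDual a b) (ha : ∑ p, ∑ i, a p i = 0)
    (hb : ∑ p, ∑ j, b p j = 0) {v : (ι → ZMod 2) → ℂ} (hv : v ≠ 0) {r : ℝ}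
    (hr : (∑ p, plaquetteOp a b p) v = r • v) :
    ∃ e d t : P → ℝ, (∀ p, e p ^ 2 = 1) ∧ (∀ p, d p ^ 2 = 1) ∧ ∏ p, e p = 1 ∧ ∏ p, d p = 1 ∧
      (∀ p, t p ^ 2 = 4 + 2 * e p + 2 * d p) ∧ ∑ p, t p = r := by
  obtain ⟨u, hu, hru, e, d, he, hd⟩ := h.exists_stabilizer_eigenvector hv hr
  have hnonneg (p : P) : 0 ≤ 4 + 2 * e p + 2 * d p := by
    nlinarith [(he p).1, (hd p).1, sq_nonneg (e p + 1), sq_nonneg (d p + 1)]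
  obtain ⟨w, hw, hpres, t, ht⟩ := exists_joint_eigenvector_of_sq (f := plaquetteOp a b)
    (s := fun p => √(4 + 2 * e p + 2 * d p)) h.commute_plaquetteOp hu
    fun p => by rw [h.plaquetteOp_apply_apply (he p).2 (hd p).2, Real.sq_sqrt (hnonneg p)]
  have hsum : (∑ p, t p) • w = r • w := by
    rw [← hpres _ (fun p => Commute.sum_left _ _ _ fun q _ => h.commute_plaquetteOp q p) r hru,
      LinearMap.sum_apply, Finset.sum_smul]
    exact Finset.sum_congr rfl fun p _ => (ht p).2.symm
  exact ⟨e, d, t, fun p => (he p).1, fun p => (hd p).1,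
    prod_eigenvalue_eq_one pauliX ha hu fun p => (he p).2,
    prod_eigenvalue_eq_one pauliZ hb hu fun p => (hd p).2,
    fun p => (ht p).1.trans (Real.sq_sqrt (hnonneg p)), smul_left_injective ℝ hw hsum⟩

theorem exists_eigenvector_of_syndrome [Finite P] (h : IsGaugeDual a b) (y : ι → ZMod 2) {t : P → ℝ}
    (ht : ∀ p, t p ^ 2 = 6 + 2 * signChar ((∑ j, b p j) ⬝ᵥ y)) :
    ∃ v ≠ 0, ∀ p, plaquetteOp a b p v = t p • v := by
  classical
  let v : (ι → ZMod 2) → ℂ :=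
    fun x => if ∀ p, (∑ j, b p j) ⬝ᵥ x = (∑ j, b p j) ⬝ᵥ y then 1 else 0
  have hv : v ≠ 0 := fun h0 => by simpa [v] using congrFun h0 y
  have hX (p : P) : pauliX (∑ i, a p i) v = (1 : ℝ) • v := by
    funext x
    simp only [pauliX_apply, v, dotProduct_add, h.sum_dotProduct_sum, add_zero, one_smul]
  have hZ (p : P) : pauliZ (∑ j, b p j) v = signChar ((∑ j, b p j) ⬝ᵥ y) • v := by
    funext x
    rw [pauliZ_apply, Pi.smul_apply]
    by_cases hx : ∀ q, (∑ j, b q j) ⬝ᵥ x = (∑ j, b q j) ⬝ᵥ y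
    · rw [hx]
    · simp only [v, if_neg hx, smul_zero]
  obtain ⟨w, hw, -, s, hs⟩ := exists_joint_eigenvector_of_sq h.commute_plaquetteOp hv
    fun p => by rw [h.plaquetteOp_apply_apply (hX p) (hZ p), ht]; ring_nf
  have hinj (p : P) : Function.Injective (pauliX (a p 0) * pauliZ (b p 0)) :=
    (involutive_addChar pauliX _).injective.comp (involutive_addChar pauliZ _).injective
  exact exists_joint_eigenvector_of_flip h.semiconjBy_flip
    (fun p q hpq => (h.commute_plaquetteOp_of_ne hpq 0 0).1.mul_left
      (h.commute_plaquetteOp_of_ne hpq 0 0).2) hinj (fun p => (hs p).1.symm) hw fun p => (hs p).2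

end IsGaugeDual

end Plaquettes

section Energies

variable {P : Type*} [Fintype P]

theorem sum_ite_mem_eq_card [DecidableEq P] (S : Finset P) (m M : ℝ) :
    ∑ p, (if p ∈ S then m else M) = Fintype.card P * M - S.card * (M - m) := by
  have hite (p : P) : (if p ∈ S then m else M) = M - if p ∈ S then M - m else 0 := by
    split_ifs <;> ring
  simp only [hite, Finset.sum_sub_distrib, Finset.sum_ite_mem, Finset.univ_inter, Finset.sum_const,
    Finset.card_univ, nsmul_eq_mul, mul_sub]

theorem sum_le_of_forall_mem_le {t : P → ℝ} {S : Finset P} {m M : ℝ} (hm : ∀ p ∈ S, t p ≤ m)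
    (hM : ∀ p, t p ≤ M) : ∑ p, t p ≤ Fintype.card P * M - S.card * (M - m) := by
  classical
  rw [← sum_ite_mem_eq_card]
  refine Finset.sum_le_sum fun p _ => ?_
  split_ifs with hp
  exacts [hm p hp, hM p]

theorem exists_ne_eq_neg_one_of_prod_eq_one {e : P → ℝ} (he : ∀ p, e p ^ 2 = 1)
    (hprod : ∏ p, e p = 1) {p : P} (hp : e p = -1) : ∃ q ≠ p, e q = -1 := by
  by_contra! hne
  have hsingle : ∏ q, e q = e p :=
    Fintype.prod_eq_single p fun q hq => (sq_eq_one_iff.mp (he q)).resolve_right (hne q hq)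
  linarith

theorem sum_eq_or_le_of_sq_eq_sq {t : P → ℝ} {M : ℝ} (hM : 0 ≤ M) (ht : ∀ p, t p ^ 2 = M ^ 2) :
    ∑ p, t p = Fintype.card P * M ∨ ∑ p, t p ≤ Fintype.card P * M - 2 * M := by
  by_cases hall : ∀ p, t p = M
  · left
    simp [hall]
  · obtain ⟨p, hp⟩ := not_forall.mp hall
    have hneg : t p = -M := (sq_eq_sq_iff_eq_or_eq_neg.mp (ht p)).resolve_left hp
    have hsum := sum_le_of_forall_mem_le (S := {p}) (m := -M) (by simp [hneg])
      fun q => (abs_le_of_sq_le_sq' (ht q).le hM).2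
    rw [Finset.card_singleton, Nat.cast_one] at hsum
    right
    linarith

theorem sq_two_mul_sqrt_two : (2 * √2) ^ 2 = 8 := by
  rw [mul_pow, Real.sq_sqrt zero_le_two]
  norm_num

theorem sum_eq_or_le_of_syndrome {e d t : P → ℝ} (he : ∀ p, e p ^ 2 = 1) (hd : ∀ p, d p ^ 2 = 1)
    (he_prod : ∏ p, e p = 1) (hd_prod : ∏ p, d p = 1)
    (ht : ∀ p, t p ^ 2 = 4 + 2 * e p + 2 * d p) :
    ∑ p, t p = Fintype.card P * (2 * √2) ∨
      ∑ p, t p ≤ Fintype.card P * (2 * √2) - 4 * (√2 - 1) := by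
  classical
  have he_le (p : P) : e p ≤ 1 := (abs_le_of_sq_le_sq' (by simp [he p]) zero_le_one).2
  have hd_le (p : P) : d p ≤ 1 := (abs_le_of_sq_le_sq' (by simp [hd p]) zero_le_one).2
  have ht_le (p : P) : t p ≤ 2 * √2 :=
    (abs_le_of_sq_le_sq' (by linarith [ht p, he_le p, hd_le p, sq_two_mul_sqrt_two])
      (by positivity)).2
  have ht_le_two {p : P} (hp : e p = -1 ∨ d p = -1) : t p ≤ 2 := by
    refine (abs_le_of_sq_le_sq' ?_ zero_le_two).2
    rcases hp with hp | hp <;> linarith [ht p, he_le p, hd_le p]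
  by_cases hflip : ∃ p, e p = -1 ∨ d p = -1
  · obtain ⟨p, hp⟩ := hflip
    obtain ⟨q, hqp, hq⟩ : ∃ q ≠ p, e q = -1 ∨ d q = -1 := hp.elim
      (fun hp => (exists_ne_eq_neg_one_of_prod_eq_one he he_prod hp).imp fun _ => .imp_right .inl)
      (fun hp => (exists_ne_eq_neg_one_of_prod_eq_one hd hd_prod hp).imp fun _ => .imp_right .inr)
    have hsum := sum_le_of_forall_mem_le (S := {q, p}) (m := 2)
      (by simp [ht_le_two hp, ht_le_two hq]) ht_le
    rw [Finset.card_pair hqp, Nat.cast_ofNat] at hsum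
    right
    linarith
  · push Not at hflip
    refine (sum_eq_or_le_of_sq_eq_sq (M := 2 * √2) (by positivity) fun p => ?_).imp_right
      fun hsum => by linarith
    rw [ht, sq_two_mul_sqrt_two, (sq_eq_one_iff.mp (he p)).resolve_right (hflip p).1,
      (sq_eq_one_iff.mp (hd p)).resolve_right (hflip p).2]
    norm_num

end Energies

section Torus

/-- The indicator vector of a triangle of three qubits, one of each kind, placed at the plaquette
`p`: the qubit of kind `k` sits at the offset `f k` from `p`. -/
def triangle {G : Type*} [Add G] [DecidableEq G] (f : Fin 3 → G) (p : G) : Fin 3 × G → ZMod 2 :=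
  fun q => if q.2 = p + f q.1 then 1 else 0

theorem triangle_dotProduct_triangle {G : Type*} [Add G] [DecidableEq G] [Fintype G]
    (f g : Fin 3 → G) (p q : G) :
    triangle g q ⬝ᵥ triangle f p = ∑ k, if p + f k = q + g k then 1 else 0 := by
  simp [triangle, dotProduct, Fintype.sum_prod_type]

theorem sum_triangle {G : Type*} [AddGroup G] [DecidableEq G] [Fintype G] (f : Fin 3 → G) :
    ∑ p, triangle f p = 1 := by
  funext q
  simp [triangle, Finset.sum_apply, ← sub_eq_iff_eq_add]

/-- The indicator vectors of the X-type triangles SW and NE of the plaquette `p`. -/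
def xTriangle (L : ℕ) (p : ZMod L × ZMod L) : Fin 2 → Q L → ZMod 2 :=
  ![triangle ![(0, 0), (0, 0), (0, 0)] p, triangle ![(1, 1), (0, 1), (1, 0)] p]

/-- The indicator vectors of the Z-type triangles SE and NW of the plaquette `p`. -/
def zTriangle (L : ℕ) (p : ZMod L × ZMod L) : Fin 2 → Q L → ZMod 2 :=
  ![triangle ![(1, 0), (0, 0), (1, 0)] p, triangle ![(0, 1), (0, 1), (0, 0)] p]

theorem ind_triangles (L : ℕ) (p : ZMod L × ZMod L) :
    ind (TSW L p) = xTriangle L p 0 ∧ ind (TNE L p) = xTriangle L p 1 ∧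
      ind (TSE L p) = zTriangle L p 0 ∧ ind (TNW L p) = zTriangle L p 1 := by
  refine ⟨?_, ?_, ?_, ?_⟩ <;> funext ⟨k, x, y⟩ <;> fin_cases k <;>
    simp [ind, TSW, TNE, TSE, TNW, xTriangle, zTriangle, triangle, Prod.ext_iff]

variable (L : ℕ) [NeZero L]

theorem isGaugeDual_triangle : IsGaugeDual (xTriangle L) (zTriangle L) := by
  -- Two of the three overlap conditions coincide and cancel modulo 2; the third one is `p = q`.
  intro p q i j
  have hcancel (x y : ZMod 2) : x + y + x = y := by
    rw [add_right_comm, CharTwo.add_self_eq_zero, zero_add]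
  fin_cases i <;> fin_cases j <;>
    simp [-Finset.sum_boole, xTriangle, zTriangle, triangle_dotProduct_triangle,
      Fin.sum_univ_three, Prod.ext_iff, CharTwo.add_self_eq_zero, hcancel]

theorem sum_xTriangle : ∑ p, ∑ i, xTriangle L p i = 0 := by
  simp [xTriangle, Finset.sum_add_distrib, sum_triangle, CharTwo.add_self_eq_zero]

theorem sum_zTriangle : ∑ p, ∑ j, zTriangle L p j = 0 := by
  simp [zTriangle, Finset.sum_add_distrib, sum_triangle, CharTwo.add_self_eq_zero]

theorem isHermitian_Ham : (Ham L).IsHermitian := by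
  refine .neg (isSelfAdjoint_sum _ fun p _ => ?_)
  exact (((isHermitian_pauliOp_left _).add (isHermitian_pauliOp_left _)).add
    (isHermitian_pauliOp_right _)).add (isHermitian_pauliOp_right _)

theorem Ham_mulVec (v : (Q L → ZMod 2) → ℂ) :
    Ham L *ᵥ v = -(∑ p, plaquetteOp (xTriangle L) (zTriangle L) p) v := by
  simp only [Ham, Matrix.neg_mulVec, Matrix.sum_mulVec, Matrix.add_mulVec, pauliOp_left_mulVec,
    pauliOp_right_mulVec, ind_triangles, plaquetteOp, LinearMap.sum_apply, LinearMap.add_apply,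
    Fin.sum_univ_two, add_assoc]

theorem eigenvalues_Ham_eq_or_le (i : Q L → ZMod 2) :
    (isHermitian_Ham L).eigenvalues i = -(2 * √2 * (L : ℝ) ^ 2) ∨
      -(2 * √2 * (L : ℝ) ^ 2) + 4 * (√2 - 1) ≤ (isHermitian_Ham L).eigenvalues i := by
  obtain ⟨v, hv, hHv⟩ := (exists_eigenvalues_eq_iff (isHermitian_Ham L)).mp ⟨i, rfl⟩
  rw [Ham_mulVec, neg_eq_iff_eq_neg, ← neg_smul] at hHv
  obtain ⟨e, d, t, he, hd, he_prod, hd_prod, ht, hsum⟩ :=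
    (isGaugeDual_triangle L).exists_syndrome_of_eigenvector (sum_xTriangle L) (sum_zTriangle L)
      hv hHv
  have hsum_t := sum_eq_or_le_of_syndrome he hd he_prod hd_prod ht
  rw [hsum, Fintype.card_prod, ZMod.card, Nat.cast_mul] at hsum_t
  exact hsum_t.imp (fun h => by linarith) fun h => by linarith

theorem exists_eigenvalues_Ham_eq (y : Q L → ZMod 2) (S : Finset (ZMod L × ZMod L)) {m : ℝ}
    (ht : ∀ p, (if p ∈ S then m else 2 * √2) ^ 2 =
      6 + 2 * signChar ((∑ j, zTriangle L p j) ⬝ᵥ y)) :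
    ∃ i, (isHermitian_Ham L).eigenvalues i =
      -(2 * √2 * (L : ℝ) ^ 2) + S.card * (2 * √2 - m) := by
  obtain ⟨v, hv, hKv⟩ := (isGaugeDual_triangle L).exists_eigenvector_of_syndrome y ht
  refine (exists_eigenvalues_eq_iff _).mpr ⟨v, hv, ?_⟩
  simp only [Ham_mulVec, LinearMap.sum_apply, hKv]
  rw [← Finset.sum_smul, sum_ite_mem_eq_card, Fintype.card_prod, ZMod.card, ← neg_smul,
    Nat.cast_mul]
  ring_nf

theorem exists_eigenvalues_Ham_eq_gauge_excitation :
    ∃ i, (isHermitian_Ham L).eigenvalues i = -(2 * √2 * (L : ℝ) ^ 2) + 4 * √2 := by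
  obtain ⟨i, hi⟩ := exists_eigenvalues_Ham_eq L 0 {0} (m := -(2 * √2)) fun p => by
    split_ifs <;> norm_num [sq_two_mul_sqrt_two]
  refine ⟨i, hi.trans ?_⟩
  rw [Finset.card_singleton]
  ring

theorem sum_zTriangle_dotProduct_single (hL : 2 ≤ L) (p : ZMod L × ZMod L) :
    (∑ j, zTriangle L p j) ⬝ᵥ Pi.single (1, 0, 0) 1 =
      if p ∈ ({0, (0, -1)} : Finset _) then 1 else 0 := by
  have : Fact (1 < L) := ⟨hL⟩
  have hNW : (0, 0) = p + (0, 1) ↔ p = (0, -1) := by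
    rw [eq_comm, ← eq_sub_iff_add_eq, Prod.mk_sub_mk, sub_zero, zero_sub]
  rw [dotProduct_single_one, Fin.sum_univ_two]
  rcases eq_or_ne p 0 with rfl | hp
  · simp [zTriangle, triangle]
  · simp [zTriangle, triangle, hNW, hp]

theorem exists_eigenvalues_Ham_eq_syndrome_pair (hL : 2 ≤ L) :
    ∃ i, (isHermitian_Ham L).eigenvalues i = -(2 * √2 * (L : ℝ) ^ 2) + 4 * (√2 - 1) := by
  have : Fact (1 < L) := ⟨hL⟩
  obtain ⟨i, hi⟩ := exists_eigenvalues_Ham_eq L (Pi.single (1, 0, 0) 1) {0, (0, -1)} (m := 2)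
    fun p => by
      rw [sum_zTriangle_dotProduct_single L hL]
      split_ifs <;> norm_num [sq_two_mul_sqrt_two, signChar_one]
  have hne : (0 : ZMod L × ZMod L) ≠ (0, -1) := by simp [Prod.ext_iff]
  rw [Finset.card_pair hne, Nat.cast_ofNat] at hi
  exact ⟨i, by linarith⟩

end Torus

/-- the energy gap of the subsystem toric code Hamiltonian is
`2Δ_s = 4(√2 − 1)`, attained by flipping a pair of syndrome bits: every eigenvalue is either
the ground energy `E₀ = −2√2 L²` or at least `E₀ + 4(√2−1)`, and `E₀ + 4(√2−1)` is attained;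
a single gauge excitation costs `Δ_g = 4√2`, and `E₀ + 4√2` is also an eigenvalue; the gap is
`min(4√2, 4(√2−1)) = 4(√2−1)`. -/
theorem spectral_gap (L : ℕ) [NeZero L] (hL : 2 ≤ L) :
    ∃ hH : (Ham L).IsHermitian,
      (∀ i, hH.eigenvalues i = -(2 * Real.sqrt 2 * (L : ℝ) ^ 2) ∨
        -(2 * Real.sqrt 2 * (L : ℝ) ^ 2) + 4 * (Real.sqrt 2 - 1) ≤ hH.eigenvalues i) ∧
      (∃ i, hH.eigenvalues i =
        -(2 * Real.sqrt 2 * (L : ℝ) ^ 2) + 4 * (Real.sqrt 2 - 1)) ∧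
      (∃ i, hH.eigenvalues i = -(2 * Real.sqrt 2 * (L : ℝ) ^ 2) + 4 * Real.sqrt 2) ∧
      min (4 * Real.sqrt 2) (4 * (Real.sqrt 2 - 1)) = 4 * (Real.sqrt 2 - 1) := by
  have hcosts : 4 * (√2 - 1) ≤ 4 * √2 := by linarith
  exact ⟨isHermitian_Ham L, eigenvalues_Ham_eq_or_le L,
    exists_eigenvalues_Ham_eq_syndrome_pair L hL, exists_eigenvalues_Ham_eq_gauge_excitation L,
    min_eq_right hcosts⟩
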